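/- For every finite abstract simplicial complex G with connection matrix L and dual connection matrix L̄ = J - L (where J is the all-ones matrix), one has det(-L·L̄) = 1 - χ(G). -/

import Mathlib

/-!
Let `ζ` be the zeta matrix of the face poset of `G`, let `ω` be the vector of signs of the
simplices and `D = diag ω`. A full simplex on a nonempty vertex set has Euler characteristic `1`.
Applied to the common faces of `x` and `y`, i.e. the faces of `x ∩ y`, this gives `L = ζᵀ D ζ`;
applied to the faces of a single `x`, it gives `J = ζᵀ ω ωᵀ ζ`. Hence
`L - J = ζᵀ (D - ω ωᵀ) ζ = ζᵀ D (1 - 𝟙 ωᵀ) ζ`. Since `det ζ = 1`, it follows that `det L = det D`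
and `det (L - J) = det D * (1 - χ(G))`, where `(det D)² = 1`.
-/

/-- The connection matrix (over `ℚ`) of a finite abstract simplicial complex `G`:
`L x y = 1` if `x ∩ y ≠ ∅` and `L x y = 0` otherwise. -/
def connectionMatrix {V : Type} [DecidableEq V] (G : Finset (Finset V)) :
    Matrix G G ℚ :=
  Matrix.of fun x y => if ((x : Finset V) ∩ (y : Finset V)).Nonempty then 1 else 0

/-- The all-ones matrix indexed by the simplices of `G`. -/
def allOnesMatrix {V : Type} [DecidableEq V] (G : Finset (Finset V)) :
    Matrix G G ℚ :=
  Matrix.of fun _ _ => 1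

open Matrix

section MatrixDeterminants

variable {R : Type*} [CommRing R]

theorem det_diagonal_sub_vecMulVec {n : Type*} [Fintype n] [DecidableEq n] (u v : n → R) :
    (diagonal u - vecMulVec u v).det = (∏ i, u i) * (1 - ∑ i, v i) := by
  have hfactor : diagonal u - vecMulVec u v = diagonal u * (1 - vecMulVec 1 v) := by
    ext i j
    simp [mul_sub, diagonal_apply, one_apply, vecMulVec_apply]
  have hrankOne : (1 - vecMulVec 1 v).det = 1 - ∑ i, v i := by
    rw [sub_eq_add_neg, ← neg_vecMulVec, vecMulVec_eq Unit,
      det_one_add_replicateCol_mul_replicateRow, dotProduct_neg, dotProduct_one, ← sub_eq_add_neg]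
  rw [hfactor, det_mul, det_diagonal, hrankOne]

theorem det_eq_prod_diag_of_not_le {α : Type*} [PartialOrder α] [Fintype α] [DecidableEq α]
    {M : Matrix α α R} (hM : ∀ a b, ¬a ≤ b → M a b = 0) : M.det = ∏ a, M a a := by
  have htri : IsUpperTriangular (m := LinearExtension α) M := fun a b hba ↦
    hM a b fun hab ↦ (toLinearExtension.monotone hab).not_gt hba
  let _ : Fintype (LinearExtension α) := ‹Fintype α›
  let _ : DecidableEq (LinearExtension α) := ‹DecidableEq α›
  exact det_of_isUpperTriangular (m := LinearExtension α) htri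

end MatrixDeterminants

section ZetaMatrix

/-- The zeta function of a poset, viewed as a matrix: the entry at `(a, b)` is `1` if `a ≤ b`
and `0` otherwise. -/
def zetaMatrix (R α : Type*) [Zero R] [One R] [LE α] [DecidableLE α] : Matrix α α R :=
  of fun a b ↦ IncidenceAlgebra.zeta R a b

variable {R α : Type*} [Fintype α]

section LE

variable [Semiring R] [LE α] [DecidableLE α]

theorem vecMul_zetaMatrix_apply (w : α → R) (a : α) :
    (w ᵥ* zetaMatrix R α) a = ∑ c with c ≤ a, w c := by
  simp [vecMul, dotProduct, zetaMatrix, Finset.sum_filter]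

theorem transpose_zetaMatrix_mul_diagonal_mul_zetaMatrix_apply [DecidableEq α] (w : α → R)
    (a b : α) :
    ((zetaMatrix R α)ᵀ * diagonal w * zetaMatrix R α) a b = ∑ c with c ≤ a ∧ c ≤ b, w c := by
  rw [mul_apply]
  simp [mul_diagonal, zetaMatrix, Finset.sum_filter, ← ite_and, and_comm]

end LE

section PartialOrder

variable [CommRing R] [PartialOrder α] [DecidableLE α] [DecidableEq α]

theorem det_zetaMatrix : (zetaMatrix R α).det = 1 := by
  rw [det_eq_prod_diag_of_not_le fun a b hab ↦ by simp [zetaMatrix, hab]]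
  simp [zetaMatrix]

theorem det_transpose_zetaMatrix_mul_mul_zetaMatrix (M : Matrix α α R) :
    ((zetaMatrix R α)ᵀ * M * zetaMatrix R α).det = M.det := by
  rw [det_mul, det_mul, det_transpose, det_zetaMatrix, one_mul, mul_one]

end PartialOrder

end ZetaMatrix

section SimplexSign

variable {V : Type*} (R : Type*) [Ring R]

/-- The sign `ω(x) = (-1)^(|x| - 1)` of a simplex `x`, i.e. `-1` to the power of its dimension. The
truncated subtraction makes `ω(∅) = 1`. -/
def simplexSign (x : Finset V) : R :=
  (-1) ^ (x.card - 1)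

variable {R}

theorem simplexSign_mul_self (x : Finset V) : simplexSign R x * simplexSign R x = 1 := by
  rw [simplexSign, ← pow_add, Even.neg_one_pow ⟨_, rfl⟩]

theorem simplexSign_eq_neg_pow_card {x : Finset V} (hx : x.Nonempty) :
    simplexSign R x = -(-1) ^ x.card := by
  rw [simplexSign, ← Nat.sub_one_add_one hx.card_ne_zero, pow_succ]
  simp

variable [DecidableEq V]

theorem sum_simplexSign_powerset_erase_empty {s : Finset V} (hs : s.Nonempty) :
    ∑ z ∈ s.powerset.erase ∅, simplexSign R z = 1 := by
  have halternating : ∑ z ∈ s.powerset, (-1 : R) ^ z.card = 0 := by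
    exact_mod_cast congrArg (Int.cast : ℤ → R) (Finset.sum_powerset_neg_one_pow_card_of_nonempty hs)
  calc ∑ z ∈ s.powerset.erase ∅, simplexSign R z
      = ∑ z ∈ s.powerset.erase ∅, -(-1 : R) ^ z.card :=
        Finset.sum_congr rfl fun z hz ↦ simplexSign_eq_neg_pow_card <|
          Finset.nonempty_iff_ne_empty.2 (Finset.ne_of_mem_erase hz)
    _ = -(∑ z ∈ s.powerset, (-1 : R) ^ z.card - 1) := by
        rw [Finset.sum_neg_distrib, Finset.sum_erase_eq_sub (Finset.empty_mem_powerset s),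
          Finset.card_empty, pow_zero]
    _ = 1 := by rw [halternating, zero_sub, neg_neg]

theorem sum_simplexSign_filter_subset {G : Finset (Finset V)} (hne : ∀ x ∈ G, x ≠ ∅)
    {s : Finset V} (hs : ∀ y ⊆ s, y ≠ ∅ → y ∈ G) :
    ∑ z : G with z.1 ⊆ s, simplexSign R z.1 = if s.Nonempty then 1 else 0 := by
  have hfaces : G.filter (· ⊆ s) = s.powerset.erase ∅ := by
    ext y
    simp only [Finset.mem_filter, Finset.mem_erase, Finset.mem_powerset]
    exact ⟨fun h ↦ ⟨hne y h.1, h.2⟩, fun h ↦ ⟨hs y h.2 h.1, h.2⟩⟩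
  rw [Finset.sum_filter, Finset.sum_coe_sort G fun z ↦ if z ⊆ s then simplexSign R z else 0,
    ← Finset.sum_filter, hfaces]
  split_ifs with h
  · exact sum_simplexSign_powerset_erase_empty h
  · simp [Finset.not_nonempty_iff_eq_empty.1 h]

end SimplexSign

section ConnectionMatrix

variable {V : Type} [DecidableEq V] {G : Finset (Finset V)} (hne : ∀ x ∈ G, x ≠ ∅)
  (hsub : ∀ x ∈ G, ∀ y : Finset V, y ⊆ x → y ≠ ∅ → y ∈ G)

include hne hsub

theorem connectionMatrix_eq_transpose_zetaMatrix_mul_diagonal_mul_zetaMatrix :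
    connectionMatrix G =
      (zetaMatrix ℚ G)ᵀ * diagonal (fun x : G ↦ simplexSign ℚ x.1) * zetaMatrix ℚ G := by
  ext x y
  have hfaces : ∀ z ⊆ x.1 ∩ y.1, z ≠ ∅ → z ∈ G := fun z hz ↦
    hsub x x.2 z (hz.trans Finset.inter_subset_left)
  rw [transpose_zetaMatrix_mul_diagonal_mul_zetaMatrix_apply, connectionMatrix, of_apply,
    ← sum_simplexSign_filter_subset hne hfaces]
  simp only [Finset.subset_inter_iff, ← Subtype.coe_le_coe]

theorem simplexSign_vecMul_zetaMatrix :
    (fun x : G ↦ simplexSign ℚ x.1) ᵥ* zetaMatrix ℚ G = 1 := by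
  ext x
  have hx : x.1.Nonempty := Finset.nonempty_iff_ne_empty.2 (hne x x.2)
  rw [vecMul_zetaMatrix_apply, Pi.one_apply]
  exact (sum_simplexSign_filter_subset hne (hsub x x.2)).trans (if_pos hx)

theorem allOnesMatrix_eq_transpose_zetaMatrix_mul_vecMulVec_mul_zetaMatrix :
    allOnesMatrix G = (zetaMatrix ℚ G)ᵀ *
      vecMulVec (fun x : G ↦ simplexSign ℚ x.1) (fun x : G ↦ simplexSign ℚ x.1) *
        zetaMatrix ℚ G := by
  rw [mul_vecMulVec, vecMulVec_mul, mulVec_transpose, simplexSign_vecMul_zetaMatrix hne hsub]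
  ext x y
  simp [allOnesMatrix, vecMulVec_apply]

theorem det_connectionMatrix : (connectionMatrix G).det = ∏ x ∈ G, simplexSign ℚ x := by
  rw [connectionMatrix_eq_transpose_zetaMatrix_mul_diagonal_mul_zetaMatrix hne hsub,
    det_transpose_zetaMatrix_mul_mul_zetaMatrix, det_diagonal, Finset.prod_coe_sort]

theorem det_connectionMatrix_sub_allOnesMatrix :
    (connectionMatrix G - allOnesMatrix G).det =
      (∏ x ∈ G, simplexSign ℚ x) * (1 - ∑ x ∈ G, simplexSign ℚ x) := by
  rw [connectionMatrix_eq_transpose_zetaMatrix_mul_diagonal_mul_zetaMatrix hne hsub,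
    allOnesMatrix_eq_transpose_zetaMatrix_mul_vecMulVec_mul_zetaMatrix hne hsub, ← Matrix.sub_mul,
    ← Matrix.mul_sub, det_transpose_zetaMatrix_mul_mul_zetaMatrix, det_diagonal_sub_vecMulVec,
    Finset.prod_coe_sort, Finset.sum_coe_sort]

end ConnectionMatrix

/-- For the connection matrix `L` and the dual connection matrix `L̄ = J - L`
(`J` the all-ones matrix), one has `det(-L·L̄) = 1 - χ(G)`. -/
theorem det_neg_connection_mul_dual {V : Type} [DecidableEq V]
    (G : Finset (Finset V))
    (hne : ∀ x ∈ G, x ≠ ∅)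
    (hsub : ∀ x ∈ G, ∀ y : Finset V, y ⊆ x → y ≠ ∅ → y ∈ G) :
    (-(connectionMatrix G * (allOnesMatrix G - connectionMatrix G))).det
      = 1 - ∑ x ∈ G, (-1 : ℚ) ^ (x.card - 1) := by
  have hsq : (∏ x ∈ G, simplexSign ℚ x) * ∏ x ∈ G, simplexSign ℚ x = 1 := by
    simp only [← Finset.prod_mul_distrib, simplexSign_mul_self, Finset.prod_const_one]
  calc (-(connectionMatrix G * (allOnesMatrix G - connectionMatrix G))).det
      = (connectionMatrix G).det * (connectionMatrix G - allOnesMatrix G).det := by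
        rw [← mul_neg, neg_sub, det_mul]
    _ = 1 - ∑ x ∈ G, simplexSign ℚ x := by
        rw [det_connectionMatrix hne hsub, det_connectionMatrix_sub_allOnesMatrix hne hsub,
          ← mul_assoc, hsq, one_mul]
    _ = 1 - ∑ x ∈ G, (-1 : ℚ) ^ (x.card - 1) := rfl
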